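/- Let q be a real number with q > 1 and let u be a real number with 0 < u < 1. Then ∑_λ u^{|λ|} · J_λ(q) / ( q^{|λ|²} · ∏_{i=1}^{|λ|} (1 − q^{−i})² ) = ∏_{r=1}^∞ ∏_{s=0}^∞ 1/(1 − u·q^{−(r+s)}), where the sum on the left is over all partitions λ of all nonnegative integers, and both sides converge. -/

import Mathlib

/-- The hook length of the cell `s = (i,j)` of a Young diagram (0-indexed cells). -/
def hookLen (μ : YoungDiagram) (s : ℕ × ℕ) : ℕ :=
  (μ.rowLen s.1 - s.2 - 1) + (μ.colLen s.2 - s.1 - 1) + 1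

/-- `n(λ) = ∑_i (i−1)λ_i`, i.e. the sum over all cells of the (0-indexed) row index. -/
def nstat (μ : YoungDiagram) : ℕ := ∑ s ∈ μ.cells, s.1

/-- `J_λ(q) = q^{|λ|²−|λ|−2n(λ)} (∏_{r=1}^{|λ|}(1−q^{−r}))² / ∏_{s∈λ}(1−q^{−h(s)})²`. -/
noncomputable def Jpoly (q : ℝ) (μ : YoungDiagram) : ℝ :=
  q ^ ((μ.card : ℤ) ^ 2 - (μ.card : ℤ) - 2 * (nstat μ : ℤ)) *
    (∏ r ∈ Finset.range μ.card, (1 - q ^ (-(r + 1 : ℤ)))) ^ 2 /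
    ∏ s ∈ μ.cells, (1 - q ^ (-(hookLen μ s : ℤ))) ^ 2


theorem cd_aux1 (a b : ℝ) (ha : a ≠ 0) (hb : b ≠ 0) : a⁻¹ - b * a⁻¹ * b⁻¹ = 0 := by
  field_simp
  ring

theorem cd_aux2 (a b c d : ℝ) (h1 : 1 - a * d ≠ 0) (h2 : 1 - c * b ≠ 0) (h3 : 1 - a * b ≠ 0) :
    (1 - a * b)⁻¹ - (1 - c * d) * (1 - a * d)⁻¹ * (1 - c * b)⁻¹ =
      ((a - c) * (1 - a * d)⁻¹) * (((b - d) * (1 - c * b)⁻¹) * (1 - a * b)⁻¹) := by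
  have h2' : 1 - b * c ≠ 0 := by rwa [mul_comm]
  rw [mul_comm c b]
  field_simp
  ring

theorem cauchy_det_aux (N : ℕ) (x y : Fin N → ℝ) (h : ∀ i j, 1 - x i * y j ≠ 0) :
    (Matrix.of fun i j => (1 - x i * y j)⁻¹).det =
      (∏ i, ∏ j ∈ Finset.Ioi i, ((x j - x i) * (y j - y i))) * ∏ i, ∏ j, (1 - x i * y j)⁻¹ := by
  induction N with
  | zero => simp
  | succ N ih =>
    have ih' := ih (fun i => x i.succ) (fun i => y i.succ) (fun i j => h _ _)
    let c : Fin (N+1) → ℝ := Fin.cons 0 (fun i => (1 - x 0 * y 0) * (1 - x i.succ * y 0)⁻¹)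
    let B : Matrix (Fin (N+1)) (Fin (N+1)) ℝ := Matrix.of fun i j => (1 - x i * y j)⁻¹ - c i * (1 - x 0 * y j)⁻¹
    have h1 : (Matrix.of fun i j => (1 - x i * y j)⁻¹).det = B.det := by
      apply Matrix.det_eq_of_forall_row_eq_smul_add_const c 0
      · rfl
      · intro i j
        simp [B, c]
    rw [h1, Matrix.det_succ_column_zero, Fin.sum_univ_succ]
    have h2 : ∀ i : Fin N, B i.succ 0 = 0 := by
      intro i
      simp only [B, c, Matrix.of_apply, Fin.cons_succ]
      exact cd_aux1 _ _ (h i.succ 0) (h 0 0)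
    simp only [h2]
    have h3 : B.submatrix (Fin.succAbove 0) Fin.succ = Matrix.of fun i j : Fin N =>
        ((x i.succ - x 0) * (1 - x i.succ * y 0)⁻¹) * (Matrix.of fun i j : Fin N => 
        ((y j.succ - y 0) * (1 - x 0 * y j.succ)⁻¹) * (Matrix.of fun i j : Fin N => (1 - x i.succ * y j.succ)⁻¹) i j) i j := by
      ext i j
      simp only [B, c, Matrix.submatrix_apply, Matrix.of_apply, Fin.cons_succ, Fin.zero_succAbove]
      exact cd_aux2 _ _ _ _ (h i.succ 0) (h 0 j.succ) (h i.succ j.succ)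
    rw [h3, Matrix.det_mul_column, Matrix.det_mul_row, ih']
    simp only [Fin.prod_univ_succ, Fin.prod_Ioi_zero, Fin.prod_Ioi_succ, Finset.prod_mul_distrib]
    simp [B, c]
    ring

theorem hasSum_mul_aux {α β : Type} (f : α → ℝ) (g : β → ℝ) (a b : ℝ) (hf : HasSum f a)
    (hg : HasSum g b) : HasSum (fun p : α × β => f p.1 * g p.2) (a * b) :=
  hf.mul hg (summable_mul_of_summable_norm hf.summable.norm hg.summable.norm)

theorem hasSum_pi_aux (N : ℕ) (f : Fin N → ℕ → ℝ) (a : Fin N → ℝ) (hf : ∀ i, HasSum (f i) (a i)) :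
    HasSum (fun k : Fin N → ℕ => ∏ i, f i (k i)) (∏ i, a i) := by
  induction N with
  | zero => simpa using hasSum_unique (fun k : Fin 0 → ℕ => ∏ i, f i (k i))
  | succ N ih =>
    have h := ih (fun i => f i.succ) (fun i => a i.succ) (fun i => hf _)
    rw [← (Fin.consEquiv (fun _ : Fin (N+1) => ℕ)).hasSum_iff]
    rw [Fin.prod_univ_succ]
    have h2 := hasSum_mul_aux (f 0) (fun k : Fin N → ℕ => ∏ i : Fin N, f i.succ (k i)) _ _ (hf 0) h
    have he : ((fun k : Fin (N+1) → ℕ => ∏ i, f i (k i)) ∘ (Fin.consEquiv (fun _ : Fin (N+1) => ℕ)))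
        = (fun p : ℕ × (Fin N → ℕ) => f 0 p.1 * ∏ i : Fin N, f i.succ (p.2 i)) := by
      funext p
      simp [Fin.prod_univ_succ, Fin.consEquiv]
    rw [he]
    exact h2

noncomputable def VV (t : ℝ) (N : ℕ) (k : Fin N → ℕ) : ℝ :=
  (Matrix.of fun i j : Fin N => t ^ ((i : ℕ) * k j)).det

theorem VV_eq (t : ℝ) (N : ℕ) (k : Fin N → ℕ) :
    VV t N k = ∏ i, ∏ j ∈ Finset.Ioi i, (t ^ k j - t ^ k i) := by
  rw [← Matrix.det_vandermonde, VV, ← Matrix.det_transpose]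
  congr 1
  ext i j
  simp [Matrix.vandermonde_apply, ← pow_mul, mul_comm]

theorem hasSum_all (t z : ℝ) (ht0 : 0 < t) (ht1 : t < 1) (hz0 : 0 < z) (hz1 : z < 1) (N : ℕ) :
    HasSum (fun k : Fin N → ℕ => (∏ i, (z ^ k i * t ^ ((i : ℕ) * k i))) * VV t N k)
      (Matrix.of fun i j : Fin N => (1 - z * t ^ (i : ℕ) * t ^ (j : ℕ))⁻¹).det := by
  simp only [VV, Matrix.det_apply', Finset.mul_sum]
  apply hasSum_sum
  intro σ _
  have h := hasSum_pi_aux N (fun i n => (z * t ^ (σ i : ℕ) * t ^ (i : ℕ)) ^ n)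
    (fun i => (1 - z * t ^ (σ i : ℕ) * t ^ (i : ℕ))⁻¹) (fun i => by
      apply hasSum_geometric_of_lt_one (by positivity)
      calc z * t ^ (σ i : ℕ) * t ^ (i : ℕ) ≤ z * 1 * 1 := by
            gcongr <;> exact pow_le_one₀ ht0.le ht1.le
        _ < 1 := by simpa)
  have h' := h.mul_left ((Equiv.Perm.sign σ : ℤ) : ℝ)
  refine Eq.subst (motive := fun F => HasSum F _) ?_ h'
  funext k
  simp only [Matrix.of_apply, mul_pow, Finset.prod_mul_distrib, ← pow_mul]
  ring

noncomputable def sortEquiv (N : ℕ) :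
    {l : Fin N → ℕ // StrictAnti l} × Equiv.Perm (Fin N) ≃ {k : Fin N → ℕ // Function.Injective k} :=
  Equiv.ofBijective (fun p => ⟨p.1.1 ∘ p.2, p.1.2.injective.comp p.2.injective⟩) (by
    constructor
    · rintro ⟨⟨l, hl⟩, σ⟩ ⟨⟨m, hm⟩, τ⟩ h
      simp only [Subtype.mk.injEq] at h
      have hr : Set.range l = Set.range m := by
        rw [← σ.surjective.range_comp l, h, τ.surjective.range_comp]
      have hlm : l = m := by
        have h1 : StrictMono (OrderDual.toDual ∘ l) := fun a b h => hl h
        have h2 : StrictMono (OrderDual.toDual ∘ m) := fun a b h => hm h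
        have := (StrictMono.range_inj h1 h2).1 (by rw [Set.range_comp, hr, Set.range_comp])
        exact this
      subst hlm
      have : σ = τ := by
        ext i
        exact congrArg Fin.val (hl.injective (congrFun h i))
      rw [this]
    · rintro ⟨k, hk⟩
      let σ := Tuple.sort (OrderDual.toDual ∘ k)
      have hm := Tuple.monotone_sort (OrderDual.toDual ∘ k)
      have ha : Antitone (k ∘ σ) := fun a b h => hm h
      refine ⟨⟨⟨k ∘ σ, ha.strictAnti_of_injective (hk.comp σ.injective)⟩, σ⁻¹⟩, ?_⟩
      apply Subtype.ext
      funext i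
      simp)

theorem hasSum_strictAnti (t z : ℝ) (ht0 : 0 < t) (ht1 : t < 1) (hz0 : 0 < z) (hz1 : z < 1) (N : ℕ) :
    HasSum (fun l : {l : Fin N → ℕ // StrictAnti l} => z ^ (∑ i, l.1 i) * VV t N l.1 ^ 2)
      (Matrix.of fun i j : Fin N => (1 - z * t ^ (i : ℕ) * t ^ (j : ℕ))⁻¹).det := by
  have h := hasSum_all t z ht0 ht1 hz0 hz1 N
  rw [← hasSum_subtype_iff_of_support_subset (s := {k | Function.Injective k})] at h
  · replace h : HasSum _ _ := (sortEquiv N).hasSum_iff.2 h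
    refine HasSum.prod_fiberwise h (fun l => ?_)
    have := hasSum_fintype (fun σ : Equiv.Perm (Fin N) => (((fun k : Fin N → ℕ => (∏ i, (z ^ k i * t ^ ((i : ℕ) * k i))) * VV t N k) ∘ (↑)) ∘ (sortEquiv N)) (l, σ))
    refine Eq.subst (motive := fun a => HasSum _ a) (Eq.symm ?_) this
    have hV : ∀ σ : Equiv.Perm (Fin N), VV t N (l.1 ∘ σ) = (Equiv.Perm.sign σ : ℤ) * VV t N l.1 := by
      intro σ
      rw [VV, VV, ← Matrix.det_permute']
      rfl
    change z ^ (∑ i, l.1 i) * VV t N l.1 ^ 2 = ∑ σ : Equiv.Perm (Fin N),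
      (∏ i : Fin N, (z ^ l.1 (σ i) * t ^ ((i : ℕ) * l.1 (σ i)))) * VV t N (l.1 ∘ σ)
    simp only [Finset.prod_mul_distrib, hV]
    have hz : ∀ σ : Equiv.Perm (Fin N), ∏ i, z ^ l.1 (σ i) = z ^ (∑ i, l.1 i) := by
      intro σ
      rw [Finset.prod_pow_eq_pow_sum, Equiv.sum_comp σ]
    simp only [hz]
    have : VV t N l.1 = ∑ σ : Equiv.Perm (Fin N), ((Equiv.Perm.sign σ : ℤ) : ℝ) * ∏ i : Fin N, t ^ ((i : ℕ) * l.1 (σ i)) := by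
      rw [VV, ← Matrix.det_transpose, Matrix.det_apply']
      rfl
    rw [sq]
    nth_rw 1 [this]
    rw [Finset.sum_mul, Finset.mul_sum]
    apply Finset.sum_congr rfl
    intro σ _
    ring
  · intro k hk
    by_contra hinj
    apply hk
    simp only [Set.mem_ofPred_eq, Function.Injective, not_forall] at hinj
    obtain ⟨a, b, hab, hne⟩ := hinj
    have : VV t N k = 0 := Matrix.det_zero_of_column_eq hne (fun i => by simp [hab])
    simp [this]

theorem lt_row_iff_lt_col (μ : YoungDiagram) (i j : ℕ) : j < μ.rowLen i ↔ i < μ.colLen j := by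
  rw [← YoungDiagram.mem_iff_lt_rowLen, YoungDiagram.mem_iff_lt_colLen]

theorem hook_row (μ : YoungDiagram) (N i : ℕ) (hi : i < N) (hN : μ.colLen 0 ≤ N) (F : ℕ → ℝ) :
    (∏ j ∈ Finset.range (μ.rowLen i), F (hookLen μ (i, j))) *
      ∏ k ∈ Finset.Ioo i N, F ((μ.rowLen i + (N - 1 - i)) - (μ.rowLen k + (N - 1 - k))) =
    ∏ m ∈ Finset.Icc 1 (μ.rowLen i + (N - 1 - i)), F m := by
  set f : ℕ → ℕ := fun j => hookLen μ (i, j) with hf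
  set g : ℕ → ℕ := fun k => (μ.rowLen i + (N - 1 - i)) - (μ.rowLen k + (N - 1 - k)) with hg
  have hcol : ∀ j, μ.colLen j ≤ N := fun j => (μ.colLen_anti 0 j (Nat.zero_le _)).trans hN
  have hfinj : Set.InjOn f (Finset.range (μ.rowLen i)) := by
    intro a ha b hb hab
    simp only [Finset.coe_range, Set.mem_Iio] at ha hb
    have ha' := (lt_row_iff_lt_col μ i a).1 ha
    have hb' := (lt_row_iff_lt_col μ i b).1 hb
    simp only [hf, hookLen] at hab
    rcases lt_trichotomy a b with h | h | h
    · have := μ.colLen_anti a b h.le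
      omega
    · exact h
    · have := μ.colLen_anti b a h.le
      omega
  have hginj : Set.InjOn g (Finset.Ioo i N) := by
    intro a ha b hb hab
    simp only [Finset.coe_Ioo, Set.mem_Ioo] at ha hb
    have ha' := μ.rowLen_anti i a ha.1.le
    have hb' := μ.rowLen_anti i b hb.1.le
    simp only [hg] at hab
    rcases lt_trichotomy a b with h | h | h
    · have := μ.rowLen_anti a b h.le
      omega
    · exact h
    · have := μ.rowLen_anti b a h.le
      omega
  have hdisj : Disjoint ((Finset.range (μ.rowLen i)).image f) ((Finset.Ioo i N).image g) := by
    rw [Finset.disjoint_left]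
    intro x hx hy
    simp only [Finset.mem_image, Finset.mem_range, Finset.mem_Ioo] at hx hy
    obtain ⟨j, hj, rfl⟩ := hx
    obtain ⟨k, hk, hjk⟩ := hy
    have hj' := (lt_row_iff_lt_col μ i j).1 hj
    have hk' := μ.rowLen_anti i k hk.1.le
    have hkj := lt_row_iff_lt_col μ k j
    simp only [hf, hg, hookLen] at hjk
    by_cases h : j < μ.rowLen k
    · have := hkj.1 h
      omega
    · have := mt hkj.2 h
      omega
  have hun : (Finset.range (μ.rowLen i)).image f ∪ (Finset.Ioo i N).image g =
      Finset.Icc 1 (μ.rowLen i + (N - 1 - i)) := by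
    apply Finset.eq_of_subset_of_card_le
    · intro x hx
      simp only [Finset.mem_union, Finset.mem_image, Finset.mem_range, Finset.mem_Ioo] at hx
      rw [Finset.mem_Icc]
      rcases hx with ⟨j, hj, rfl⟩ | ⟨k, hk, rfl⟩
      · have hj' := (lt_row_iff_lt_col μ i j).1 hj
        have := hcol j
        simp only [hf, hookLen]
        omega
      · have hk' := μ.rowLen_anti i k hk.1.le
        simp only [hg]
        omega
    · rw [Finset.card_union_of_disjoint hdisj, Finset.card_image_of_injOn hfinj,
        Finset.card_image_of_injOn hginj]
      simp
      omega
  rw [← hun, Finset.prod_union hdisj, Finset.prod_image hfinj, Finset.prod_image hginj]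

def lfun (μ : YoungDiagram) (N : ℕ) : Fin N → ℕ := fun i => μ.rowLen i + (N - 1 - i)

theorem mem_cells_iff' (μ : YoungDiagram) (N : ℕ) (hN : μ.colLen 0 ≤ N) (p : ℕ × ℕ) :
    p ∈ μ.cells ↔ p.1 ∈ Finset.range N ∧ p.2 ∈ Finset.range (μ.rowLen p.1) := by
  obtain ⟨i, j⟩ := p
  rw [YoungDiagram.mem_cells, YoungDiagram.mem_iff_lt_rowLen, Finset.mem_range, Finset.mem_range]
  constructor
  · intro h
    refine ⟨?_, h⟩
    have := (lt_row_iff_lt_col μ i j).1 h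
    have := μ.colLen_anti 0 j (Nat.zero_le _)
    dsimp only
    omega
  · exact fun h => h.2

theorem prod_cells (μ : YoungDiagram) (N : ℕ) (hN : μ.colLen 0 ≤ N) (G : ℕ × ℕ → ℝ) :
    ∏ s ∈ μ.cells, G s = ∏ i : Fin N, ∏ j ∈ Finset.range (μ.rowLen i), G (i, j) := by
  rw [Finset.prod_finset_product μ.cells (Finset.range N) (fun i => Finset.range (μ.rowLen i)) (mem_cells_iff' μ N hN), Finset.prod_range]

theorem sum_cells (μ : YoungDiagram) (N : ℕ) (hN : μ.colLen 0 ≤ N) (G : ℕ × ℕ → ℕ) :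
    ∑ s ∈ μ.cells, G s = ∑ i : Fin N, ∑ j ∈ Finset.range (μ.rowLen i), G (i, j) := by
  rw [Finset.sum_finset_product μ.cells (Finset.range N) (fun i => Finset.range (μ.rowLen i)) (mem_cells_iff' μ N hN), Finset.sum_range]

noncomputable def hookP (t : ℝ) (μ : YoungDiagram) : ℝ := ∏ s ∈ μ.cells, (1 - t ^ hookLen μ s)
noncomputable def contP (t : ℝ) (N : ℕ) (μ : YoungDiagram) : ℝ :=
  ∏ s ∈ μ.cells, (1 - t ^ (N - s.1 + s.2))

theorem VV_hook (t : ℝ) (N : ℕ) (μ : YoungDiagram) (hN : μ.colLen 0 ≤ N) :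
    VV t N (lfun μ N) * hookP t μ = t ^ (∑ i : Fin N, (i : ℕ) * lfun μ N i) *
      ∏ i : Fin N, ∏ m ∈ Finset.Icc 1 (lfun μ N i), (1 - t ^ m) := by
  have h1 : VV t N (lfun μ N) = (∏ i : Fin N, ∏ j ∈ Finset.Ioi i, t ^ lfun μ N j) *
      ∏ i : Fin N, ∏ j ∈ Finset.Ioi i, (1 - t ^ (lfun μ N i - lfun μ N j)) := by
    rw [VV_eq, ← Finset.prod_mul_distrib]
    refine Finset.prod_congr rfl fun i _ => ?_
    rw [← Finset.prod_mul_distrib]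
    refine Finset.prod_congr rfl fun j hj => ?_
    have hij : i < j := Finset.mem_Ioi.1 hj
    have : lfun μ N j ≤ lfun μ N i := by
      have := μ.rowLen_anti i j (Fin.le_def.1 hij.le)
      have h2 : (i : ℕ) < j := hij
      simp only [lfun]
      omega
    rw [mul_sub, mul_one, ← pow_add]
    congr 2
    omega
  have h2 : (∏ i : Fin N, ∏ j ∈ Finset.Ioi i, t ^ lfun μ N j) =
      t ^ (∑ i : Fin N, (i : ℕ) * lfun μ N i) := by
    rw [Finset.prod_comm' (s' := fun j => Finset.Iio j) (t' := Finset.univ) (by simp)]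
    simp only [Finset.prod_const, Fin.card_Iio, ← pow_mul]
    rw [Finset.prod_pow_eq_pow_sum]
    simp only [mul_comm]
  have h3 : ∀ i : Fin N, ∏ j ∈ Finset.Ioi i, (1 - t ^ (lfun μ N i - lfun μ N j)) =
      ∏ k ∈ Finset.Ioo (i : ℕ) N, (1 - t ^ ((μ.rowLen i + (N - 1 - i)) - (μ.rowLen k + (N - 1 - k)))) := by
    intro i
    rw [← Fin.map_valEmbedding_Ioi, Finset.prod_map]
    rfl
  rw [h1, h2, hookP, prod_cells μ N hN, mul_assoc, ← Finset.prod_mul_distrib]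
  congr 1
  refine Finset.prod_congr rfl fun i _ => ?_
  rw [h3, mul_comm]
  exact hook_row μ N i i.2 hN (fun m => 1 - t ^ m)

theorem rowLen_bot (i : ℕ) : (⊥ : YoungDiagram).rowLen i = 0 := by
  by_contra h
  have := YoungDiagram.mem_iff_lt_rowLen.2 (Nat.pos_of_ne_zero h)
  simp at this

theorem colLen_bot (i : ℕ) : (⊥ : YoungDiagram).colLen i = 0 := by
  by_contra h
  have := YoungDiagram.mem_iff_lt_colLen.2 (Nat.pos_of_ne_zero h)
  simp at this

theorem sum_lfun (N : ℕ) (μ : YoungDiagram) (hN : μ.colLen 0 ≤ N) :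
    ∑ i, lfun μ N i = μ.card + ∑ i, lfun ⊥ N i := by
  have := sum_cells μ N hN (fun _ => 1)
  simp only [Finset.sum_const, smul_eq_mul, mul_one, Finset.card_range] at this
  rw [YoungDiagram.card, this, ← Finset.sum_add_distrib]
  simp [lfun, rowLen_bot]

theorem sum_mul_lfun (N : ℕ) (μ : YoungDiagram) (hN : μ.colLen 0 ≤ N) :
    ∑ i : Fin N, (i : ℕ) * lfun μ N i = nstat μ + ∑ i : Fin N, (i : ℕ) * lfun ⊥ N i := by
  have := sum_cells μ N hN (fun s => s.1)
  simp only [Finset.sum_const, smul_eq_mul, Finset.card_range] at this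
  rw [nstat, this, ← Finset.sum_add_distrib]
  refine Finset.sum_congr rfl fun i _ => ?_
  simp [lfun, rowLen_bot]
  ring

theorem VV_lfun (t : ℝ) (N : ℕ) (μ : YoungDiagram) (hN : μ.colLen 0 ≤ N) :
    VV t N (lfun μ N) * hookP t μ = VV t N (lfun ⊥ N) * t ^ nstat μ * contP t N μ := by
  have hb := VV_hook t N ⊥ (by simp [colLen_bot])
  have hb1 : hookP t ⊥ = 1 := by simp [hookP]
  rw [hb1, mul_one] at hb
  rw [VV_hook t N μ hN, hb, sum_mul_lfun N μ hN, contP, prod_cells μ N hN, pow_add]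
  have : ∀ i : Fin N, ∏ m ∈ Finset.Icc 1 (lfun μ N i), (1 - t ^ m) =
      (∏ m ∈ Finset.Icc 1 (lfun ⊥ N i), (1 - t ^ m)) *
       ∏ j ∈ Finset.range (μ.rowLen i), (1 - t ^ (N - i + j)) := by
    intro i
    simp only [lfun, rowLen_bot, zero_add]
    have hi := i.2
    generalize μ.rowLen i = r
    induction r with
    | zero => simp
    | succ r ih =>
      rw [Finset.prod_range_succ, ← mul_assoc, ← ih,
        show r + 1 + (N - 1 - i) = r + (N - 1 - i) + 1 by omega, Finset.prod_Icc_succ_top (by omega),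
        show r + (N - 1 - i) + 1 = N - i + r by omega]
  simp only [this, Finset.prod_mul_distrib]
  ring

theorem lfun_strictAnti (μ : YoungDiagram) (N : ℕ) : StrictAnti (lfun μ N) := by
  intro i j hij
  have := μ.rowLen_anti i j (Fin.le_def.1 hij.le)
  have h2 : (i : ℕ) < j := hij
  simp only [lfun]
  omega

theorem rowLen_eq_zero (μ : YoungDiagram) (i : ℕ) (h : μ.colLen 0 ≤ i) : μ.rowLen i = 0 := by
  by_contra h'
  have := (lt_row_iff_lt_col μ i 0).1 (Nat.pos_of_ne_zero h')
  omega

noncomputable def lEquiv (N : ℕ) :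
    {μ : YoungDiagram // μ.colLen 0 ≤ N} ≃ {l : Fin N → ℕ // StrictAnti l} :=
  Equiv.ofBijective (fun μ => ⟨lfun μ.1 N, lfun_strictAnti μ.1 N⟩) (by
    constructor
    · rintro ⟨μ, hμ⟩ ⟨ν, hν⟩ h
      simp only [Subtype.mk.injEq] at h ⊢
      have hr : ∀ i, μ.rowLen i = ν.rowLen i := by
        intro i
        by_cases hi : i < N
        · have := congrFun h ⟨i, hi⟩
          simp only [lfun] at this
          omega
        · rw [rowLen_eq_zero μ i (by omega), rowLen_eq_zero ν i (by omega)]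
      ext ⟨i, j⟩
      rw [YoungDiagram.mem_cells, YoungDiagram.mem_cells, YoungDiagram.mem_iff_lt_rowLen,
        YoungDiagram.mem_iff_lt_rowLen, hr]
    · rintro ⟨l, hl⟩
      have key : ∀ (d : ℕ) (i j : Fin N), (i : ℕ) + d = j → l j + d ≤ l i := by
        intro d
        induction d with
        | zero => 
          intro i j h
          have : i = j := Fin.ext (by omega)
          simp [this]
        | succ d ih =>
          intro i j h
          have h1 := ih i ⟨j - 1, by omega⟩ (by simp; omega)
          have h2 : l j < l ⟨j - 1, by omega⟩ := hl (Fin.lt_def.2 (by simp; omega))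
          omega
      have key0 : ∀ i : Fin N, N - 1 - i ≤ l i := by
        intro i
        have := key (N - 1 - i) i ⟨N - 1, by have := i.2; omega⟩ (by have := i.2; simp only; omega)
        omega
      let r : ℕ → ℕ := fun i => if h : i < N then l ⟨i, h⟩ - (N - 1 - i) else 0
      have hr : Antitone r := by
        intro a b hab
        simp only [r]
        by_cases hb : b < N
        · have ha : a < N := by omega
          simp only [ha, hb, dif_pos]
          have := key (b - a) ⟨a, ha⟩ ⟨b, hb⟩ (by simp; omega)
          omega
        · simp [hb]
      let μ : YoungDiagram :=
        { cells := (Finset.range N ×ˢ Finset.range (r 0)).filter (fun p => p.2 < r p.1)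
          isLowerSet := by
            rintro ⟨a, b⟩ ⟨c, d⟩ h hab
            simp only [Finset.mem_coe, Finset.mem_filter, Finset.mem_product, Finset.mem_range] at hab ⊢
            have h1 : c ≤ a := h.1
            have h2 : d ≤ b := h.2
            have := hr h1
            obtain ⟨⟨x1, x2⟩, x3⟩ := hab
            refine ⟨⟨?_, ?_⟩, ?_⟩ <;> omega }
      have hmem : ∀ i j, (i, j) ∈ μ ↔ j < r i := by
        intro i j
        rw [← YoungDiagram.mem_cells]
        simp only [μ, Finset.mem_filter, Finset.mem_product, Finset.mem_range]
        constructor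
        · exact fun h => h.2
        · intro h
          refine ⟨⟨?_, ?_⟩, h⟩
          · by_contra hi
            simp [r, hi] at h
          · exact h.trans_le (hr (Nat.zero_le _))
      have hrow : ∀ i, μ.rowLen i = r i := by
        intro i
        have : ∀ j, j < μ.rowLen i ↔ j < r i := fun j => by
          rw [← hmem, YoungDiagram.mem_iff_lt_rowLen]
        have h1 := this (μ.rowLen i)
        have h2 := this (r i)
        omega
      refine ⟨⟨μ, ?_⟩, ?_⟩
      · by_contra hc
        have := (lt_row_iff_lt_col μ N 0).2 (by omega)
        rw [hrow] at this
        simp [r] at this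
      · apply Subtype.ext
        funext i
        simp only [lfun, hrow, r, i.2, dif_pos]
        have := key0 i
        simp only [Fin.eta]
        omega)

theorem hookP_pos (t : ℝ) (ht0 : 0 < t) (ht1 : t < 1) (μ : YoungDiagram) : 0 < hookP t μ := by
  apply Finset.prod_pos
  intro s _
  have : t ^ hookLen μ s < 1 := pow_lt_one₀ ht0.le ht1 (by simp [hookLen])
  linarith

theorem contP_zero (t : ℝ) (N : ℕ) (μ : YoungDiagram) (h : ¬ μ.colLen 0 ≤ N) : contP t N μ = 0 := by
  apply Finset.prod_eq_zero (i := (N, 0))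
  · rw [YoungDiagram.mem_cells, YoungDiagram.mem_iff_lt_colLen]
    omega
  · simp

theorem VV_bot_ne (t : ℝ) (ht0 : 0 < t) (ht1 : t < 1) (N : ℕ) : VV t N (lfun ⊥ N) ≠ 0 := by
  have hb := VV_hook t N ⊥ (by simp [colLen_bot])
  have hb1 : hookP t ⊥ = 1 := by simp [hookP]
  rw [hb1, mul_one] at hb
  rw [hb]
  apply ne_of_gt
  apply mul_pos (by positivity)
  refine Finset.prod_pos fun i _ => Finset.prod_pos fun m hm => ?_
  have : t ^ m < 1 := pow_lt_one₀ ht0.le ht1 (by simp at hm; omega)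
  linarith

theorem VV_bot_sq (t : ℝ) (N : ℕ) :
    VV t N (lfun ⊥ N) ^ 2 = (∏ i : Fin N, ∏ j ∈ Finset.Ioi i, (t ^ (j : ℕ) - t ^ (i : ℕ))) ^ 2 := by
  have h1 : (∏ i : Fin N, ∏ j ∈ Finset.Ioi i, (t ^ (j : ℕ) - t ^ (i : ℕ))) =
      VV t N (fun i => (i : ℕ)) := by rw [VV_eq]
  have h2 : VV t N (lfun ⊥ N) = (Equiv.Perm.sign (Fin.revPerm (n := N)) : ℤ) * VV t N (fun i => (i : ℕ)) := by
    rw [VV, VV, ← Matrix.det_permute']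
    congr 1
    ext i j
    simp only [Matrix.of_apply, Matrix.submatrix_apply, lfun, rowLen_bot, zero_add, id,
      Fin.revPerm_apply, Fin.val_rev]
    congr 2
    omega
  rw [h1, h2, mul_pow]
  rcases Int.units_eq_one_or (Equiv.Perm.sign (Fin.revPerm (n := N))) with h | h <;> simp [h]

theorem det_eq (t z : ℝ) (ht0 : 0 < t) (ht1 : t < 1) (hz0 : 0 < z) (hz1 : z < 1) (N : ℕ) :
    (Matrix.of fun i j : Fin N => (1 - z * t ^ (i : ℕ) * t ^ (j : ℕ))⁻¹).det =
      z ^ (∑ i, lfun ⊥ N i) * VV t N (lfun ⊥ N) ^ 2 *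
      ∏ i : Fin N, ∏ j : Fin N, (1 - z * t ^ (i : ℕ) * t ^ (j : ℕ))⁻¹ := by
  rw [cauchy_det_aux N (fun i => z * t ^ (i : ℕ)) (fun j => t ^ (j : ℕ))]
  · congr 1
    rw [VV_bot_sq]
    simp only [← mul_sub, mul_assoc, Finset.prod_mul_distrib, Finset.prod_const, Fin.card_Ioi]
    rw [Finset.prod_pow_eq_pow_sum, ← sq]
    congr 2
    simp [lfun, rowLen_bot]
  · intro i j
    have : z * t ^ (i : ℕ) * t ^ (j : ℕ) < 1 :=
      calc z * t ^ (i : ℕ) * t ^ (j : ℕ) ≤ z * 1 * 1 := by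
            gcongr <;> exact pow_le_one₀ ht0.le ht1.le
        _ < 1 := by simpa
    exact ne_of_gt (sub_pos.2 this)

theorem hasSum_N (t z : ℝ) (ht0 : 0 < t) (ht1 : t < 1) (hz0 : 0 < z) (hz1 : z < 1) (N : ℕ) :
    HasSum (fun μ : YoungDiagram => z ^ μ.card * (t ^ nstat μ / hookP t μ) ^ 2 * contP t N μ ^ 2)
      (∏ p ∈ Finset.range N ×ˢ Finset.range N, (1 - z * t ^ p.1 * t ^ p.2)⁻¹) := by
  rw [← hasSum_subtype_iff_of_support_subset (s := {μ : YoungDiagram | μ.colLen 0 ≤ N})]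
  · have h := hasSum_strictAnti t z ht0 ht1 hz0 hz1 N
    rw [det_eq t z ht0 ht1 hz0 hz1 N] at h
    replace h : HasSum _ _ := (lEquiv N).hasSum_iff.2 h
    have hc : z ^ (∑ i, lfun ⊥ N i) * VV t N (lfun ⊥ N) ^ 2 ≠ 0 :=
      mul_ne_zero (by positivity) (pow_ne_zero _ (VV_bot_ne t ht0 ht1 N))
    rw [Finset.prod_product, Finset.prod_range]
    simp only [Finset.prod_range]
    rw [← hasSum_mul_left_iff hc]
    refine Eq.subst (motive := fun F => HasSum F _) ?_ h
    funext ⟨μ, hμ⟩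
    change z ^ (∑ i, lfun μ N i) * VV t N (lfun μ N) ^ 2 = z ^ (∑ i, lfun ⊥ N i) * VV t N (lfun ⊥ N) ^ 2 *
      (z ^ μ.card * (t ^ nstat μ / hookP t μ) ^ 2 * contP t N μ ^ 2)
    have hV := VV_lfun t N μ hμ
    have hH := (hookP_pos t ht0 ht1 μ).ne'
    rw [← eq_div_iff hH] at hV
    rw [hV, sum_lfun N μ hμ, pow_add]
    ring
  · intro μ hμ
    by_contra h
    apply hμ
    simp only [contP_zero t N μ h]
    simp

theorem contP_nonneg_le (t : ℝ) (ht0 : 0 < t) (ht1 : t < 1) (N : ℕ) (μ : YoungDiagram) :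
    0 ≤ contP t N μ ∧ contP t N μ ≤ 1 := by
  have h : ∀ n : ℕ, 0 ≤ 1 - t ^ n ∧ 1 - t ^ n ≤ 1 := fun n => by
    have := pow_le_one₀ (n := n) ht0.le ht1.le
    have : 0 < t ^ n := by positivity
    constructor <;> linarith
  exact ⟨Finset.prod_nonneg fun s _ => (h _).1,
    Finset.prod_le_one (fun s _ => (h _).1) fun s _ => (h _).2⟩

theorem contP_tendsto (t : ℝ) (ht0 : 0 < t) (ht1 : t < 1) (μ : YoungDiagram) :
    Filter.Tendsto (fun N => contP t N μ) Filter.atTop (nhds 1) := by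
  have : Filter.Tendsto (fun N => contP t N μ) Filter.atTop (nhds (∏ s ∈ μ.cells, (1 - 0 : ℝ))) := by
    apply tendsto_finsetProd
    intro s _
    apply Filter.Tendsto.sub tendsto_const_nhds
    refine (tendsto_pow_atTop_nhds_zero_of_lt_one ht0.le ht1).comp ?_
    apply Filter.tendsto_atTop_mono (f := fun N => N - s.1)
    · intro N
      simp
    · exact Filter.tendsto_sub_atTop_nat s.1
  simpa using this

theorem main_aux (t z : ℝ) (ht0 : 0 < t) (ht1 : t < 1) (hz0 : 0 < z) (hz1 : z < 1) :
    ∃ S : ℝ, HasSum (fun μ : YoungDiagram => z ^ μ.card * (t ^ nstat μ / hookP t μ) ^ 2) S ∧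
      HasProd (fun p : ℕ × ℕ => (1 - z * t ^ p.1 * t ^ p.2)⁻¹) S := by
  have hx : ∀ p : ℕ × ℕ, 0 ≤ z * t ^ p.1 * t ^ p.2 ∧ z * t ^ p.1 * t ^ p.2 ≤ z := by
    intro p
    refine ⟨by positivity, ?_⟩
    calc z * t ^ p.1 * t ^ p.2 ≤ z * 1 * 1 := by
            gcongr <;> exact pow_le_one₀ ht0.le ht1.le
      _ = z := by ring
  have hmul : Multipliable (fun p : ℕ × ℕ => (1 - z * t ^ p.1 * t ^ p.2)⁻¹) := by
    have hg := (hasSum_geometric_of_lt_one ht0.le ht1)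
    have hs := ((hasSum_mul_aux _ _ _ _ hg hg).mul_left (z * (1 - z)⁻¹)).summable
    have hs2 : Summable (fun p : ℕ × ℕ => (1 - z * t ^ p.1 * t ^ p.2)⁻¹ - 1) := by
      refine Summable.of_nonneg_of_le (fun p => ?_) (fun p => ?_) hs
      · have := hx p
        have : 1 ≤ (1 - z * t ^ p.1 * t ^ p.2)⁻¹ := (one_le_inv₀ (by linarith)).2 (by linarith)
        linarith
      · have h := hx p
        have e : (1 - z * t ^ p.1 * t ^ p.2)⁻¹ - 1 = (z * t ^ p.1 * t ^ p.2) * (1 - z * t ^ p.1 * t ^ p.2)⁻¹ := by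
          have : 1 - z * t ^ p.1 * t ^ p.2 ≠ 0 := by linarith
          generalize z * t ^ p.1 * t ^ p.2 = w at *
          field_simp
          ring
        rw [e]
        calc _ ≤ (z * t ^ p.1 * t ^ p.2) * (1 - z)⁻¹ := by
              apply mul_le_mul_of_nonneg_left _ h.1
              apply inv_anti₀ <;> linarith
          _ = _ := by ring
    have := Real.multipliable_one_add_of_summable hs2
    simpa using this
  obtain ⟨S, hS⟩ := hmul
  refine ⟨S, ?_, hS⟩
  have hlim : Filter.Tendsto (fun N => ∏ p ∈ Finset.range N ×ˢ Finset.range N,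
      (1 - z * t ^ p.1 * t ^ p.2)⁻¹) Filter.atTop (nhds S) := by
    have h1 : Filter.Tendsto (fun N : ℕ => Finset.range N ×ˢ Finset.range N) Filter.atTop Filter.atTop := by
      apply Filter.tendsto_atTop_finset_of_monotone
      · intro a b hab
        exact Finset.product_subset_product (Finset.range_mono hab) (Finset.range_mono hab)
      · intro p
        refine ⟨p.1 + p.2 + 1, ?_⟩
        simp only [Finset.mem_product, Finset.mem_range]
        omega
    have hS' := hS
    rw [HasProd, SummationFilter.unconditional_filter] at hS'
    exact hS'.comp h1
  have hg : ∀ μ : YoungDiagram, 0 ≤ z ^ μ.card * (t ^ nstat μ / hookP t μ) ^ 2 := fun μ => by positivity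
  have htm : ∀ μ : YoungDiagram, Filter.Tendsto
      (fun N => z ^ μ.card * (t ^ nstat μ / hookP t μ) ^ 2 * contP t N μ ^ 2) Filter.atTop
      (nhds (z ^ μ.card * (t ^ nstat μ / hookP t μ) ^ 2)) := fun μ => by
    simpa using ((contP_tendsto t ht0 ht1 μ).pow 2).const_mul (z ^ μ.card * (t ^ nstat μ / hookP t μ) ^ 2)
  have hsum : Summable (fun μ : YoungDiagram => z ^ μ.card * (t ^ nstat μ / hookP t μ) ^ 2) := by
    apply summable_of_sum_le (c := S) hg
    intro F
    refine le_of_tendsto_of_tendsto' (tendsto_finsetSum F fun μ _ => htm μ) hlim fun N => ?_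
    exact sum_le_hasSum F (fun μ _ => mul_nonneg (hg μ) (sq_nonneg _)) (hasSum_N t z ht0 ht1 hz0 hz1 N)
  have hd := tendsto_tsum_of_dominated_convergence hsum htm (Filter.Eventually.of_forall fun N μ => by
    have h := contP_nonneg_le t ht0 ht1 N μ
    rw [Real.norm_of_nonneg (mul_nonneg (hg μ) (sq_nonneg _))]
    exact mul_le_of_le_one_right (hg μ) (pow_le_one₀ h.1 h.2))
  simp only [(hasSum_N t z ht0 ht1 hz0 hz1 _).tsum_eq] at hd
  rw [tendsto_nhds_unique hlim hd]
  exact hsum.hasSum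

/-- For real `q > 1`, `0 < u < 1`:
`∑_λ u^{|λ|} J_λ(q) / (q^{|λ|²} ∏_{i=1}^{|λ|}(1−q^{−i})²)
  = ∏_{r=1}^∞ ∏_{s=0}^∞ 1/(1 − u q^{−(r+s)})`,
the sum being over all partitions of all nonnegative integers, both sides converging. -/
theorem stmt_7 (q u : ℝ) (hq : 1 < q) (hu0 : 0 < u) (hu1 : u < 1) :
    ∃ S : ℝ,
      HasSum (fun μ : YoungDiagram =>
        u ^ μ.card * Jpoly q μ /
          (q ^ (μ.card ^ 2) *
            ∏ i ∈ Finset.range μ.card, (1 - q ^ (-(i + 1 : ℤ))) ^ 2)) S ∧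
      HasProd (fun p : ℕ × ℕ =>
        (1 - u * q ^ (-((p.1 : ℤ) + 1 + (p.2 : ℤ))))⁻¹) S := by
  have hq0 : 0 < q := by linarith
  have ht0 : 0 < q⁻¹ := inv_pos.2 hq0
  have ht1 : q⁻¹ < 1 := inv_lt_one_of_one_lt₀ hq
  obtain ⟨S, h1, h2⟩ := main_aux q⁻¹ (u * q⁻¹) ht0 ht1 (by positivity)
    (mul_lt_one_of_nonneg_of_lt_one_left hu0.le hu1 ht1.le)
  refine ⟨S, ?_, ?_⟩
  · refine Eq.subst (motive := fun F => HasSum F S) ?_ h1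
    funext μ
    have hH := (hookP_pos q⁻¹ ht0 ht1 μ).ne'
    have e1 : ∏ s ∈ μ.cells, (1 - q ^ (-(hookLen μ s : ℤ))) ^ 2 = hookP q⁻¹ μ ^ 2 := by
      rw [Finset.prod_pow, hookP]
      simp only [zpow_neg, zpow_natCast, inv_pow]
    have hA : (∏ r ∈ Finset.range μ.card, (1 - q ^ (-(r + 1 : ℤ)))) ≠ 0 := by
      refine Finset.prod_ne_zero_iff.2 fun r _ => ?_
      have : q ^ (-(r + 1 : ℤ)) < 1 := zpow_lt_one_of_neg₀ hq (by omega)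
      linarith
    have e2 : q ^ ((μ.card : ℤ) ^ 2 - (μ.card : ℤ) - 2 * (nstat μ : ℤ)) =
        q ^ (μ.card ^ 2) * q⁻¹ ^ μ.card * (q⁻¹ ^ nstat μ) ^ 2 := by
      rw [zpow_sub₀ hq0.ne', zpow_sub₀ hq0.ne', inv_pow, inv_pow, div_eq_mul_inv, div_eq_mul_inv]
      congr 2
      rw [inv_pow, ← pow_mul, mul_comm, ← zpow_natCast]
      push_cast
      rfl
    rw [Jpoly, e1, e2, Finset.prod_pow]
    have hq2 : q ^ (μ.card ^ 2) ≠ 0 := by positivity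
    generalize q ^ (μ.card ^ 2) = Q at *
    generalize (∏ r ∈ Finset.range μ.card, (1 - q ^ (-(r + 1 : ℤ)))) = A at *
    generalize hookP q⁻¹ μ = H at *
    generalize nstat μ = n at *
    rw [mul_pow]
    generalize q⁻¹ ^ n = T at *
    generalize q⁻¹ ^ μ.card = T' at *
    field_simp
  · refine Eq.subst (motive := fun F => HasProd F S) ?_ h2
    funext p
    congr 2
    rw [show (-((p.1 : ℤ) + 1 + (p.2 : ℤ))) = -((p.1 + 1 + p.2 : ℕ) : ℤ) by push_cast; ring, zpow_neg, zpow_natCast,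
      ← inv_pow, pow_add, pow_add]
    ring
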